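/- For every k ≥ 1 and D ≥ 0, every product of the generators T_i, T_i' (1 ≤ i ≤ k−1) and X_i, Y_i (1 ≤ i ≤ k) of H⁺ in which the total number of X- and Y-factors equals D lies in the K-linear span of the standard words u₁u₂⋯u_k T_w with w ∈ S_k, each u_i a word in {X_i, Y_i}, and the total number of letters in u₁,…,u_k equal to D. -/

import Mathlib

/-!
The proof has two independent parts. Let `A k d` be the span of all products of generators of
rank `k` with `d` letters.

*Ordering the letters.* A letter can always be brought to the front (`A_succ_le_N`), because
`T_i^{±1}` moves past a letter at the cost of changing its index within `{i, i+1}`. For two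
letters `a_j b_i` with `i < j` a stronger fact holds (`exchange`): the product is a combination
of products `c_p x` with `p < j` and `x` of degree one. For adjacent lowest indices this is
`X_2 Y_1 = Y_1 (T_1 X_1 T_1')` and `Y_2 X_1 = X_1 (T_1' Y_1 T_1)`, both consequences of the cross
relation, and the general case follows by conjugating with `T`'s. Now let `y` be ordered, of
degree `d`. If `a_j y` is not ordered, then `y` starts with some `b_i`, `i < j`, and `exchange`
turns `a_j y` into a combination of `c_p x` with `p < j` and `x` of degree `d`. Induction on `d`
reorders `x` and induction on `j` then handles `c_p x` (`letter_mul_S`). The corrections may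
raise the indices of later letters, but they always lower the leading one, so this terminates.

*The Hecke part.* It remains to see that products of `T_i^{±1}` of rank `k` are combinations of
the `T_w`, `w ∈ S_k`. This is the usual left multiplication rule (`tt_mul_Hk`), which requires
that `T_w` be independent of the reduced expression. That independence (`red_unique`) comes from a
version of the exchange property (`red_exchange`) for words in which every step is an ascent of
`w⁻¹`, carried out simultaneously on permutations and on products of `T`'s using only braid
relations. Expressions of minimal length are of this kind (`red_of_min`).
-/


/-!
STATEMENT 0: The standard words form a basis of the stable limit DAHA `H⁺` over `K = ℚ(h)`.
Generator index `i : ℕ` represents the paper's index `i + 1 ≥ 1`.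
-/

noncomputable section

abbrev Kfield : Type := RatFunc ℚ

/-- The variable `h` of `K = ℚ(h)`. -/
def hvar : Kfield := RatFunc.X

/-- Generators of the stable limit DAHA; index `i : ℕ` stands for the paper index `i + 1`. -/
inductive HGen : Type
  | T : ℕ → HGen
  | T' : ℕ → HGen
  | X : ℕ → HGen
  | Y : ℕ → HGen

open FreeAlgebra in
/-- The defining relations of the stable limit DAHA `H⁺`. -/
inductive HRel : FreeAlgebra Kfield HGen → FreeAlgebra Kfield HGen → Prop
  | TT' (i : ℕ) : HRel (ι Kfield (HGen.T i) * ι Kfield (HGen.T' i)) 1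
  | T'T (i : ℕ) : HRel (ι Kfield (HGen.T' i) * ι Kfield (HGen.T i)) 1
  | TminusT' (i : ℕ) :
      HRel (ι Kfield (HGen.T i) - ι Kfield (HGen.T' i))
        (algebraMap Kfield (FreeAlgebra Kfield HGen) hvar)
  | Tcomm (i j : ℕ) (hij : i + 1 < j ∨ j + 1 < i) :
      HRel (ι Kfield (HGen.T i) * ι Kfield (HGen.T j))
        (ι Kfield (HGen.T j) * ι Kfield (HGen.T i))
  | braid (i : ℕ) :
      HRel (ι Kfield (HGen.T i) * ι Kfield (HGen.T (i + 1)) * ι Kfield (HGen.T i))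
        (ι Kfield (HGen.T (i + 1)) * ι Kfield (HGen.T i) * ι Kfield (HGen.T (i + 1)))
  | TXT (i : ℕ) :
      HRel (ι Kfield (HGen.T' i) * ι Kfield (HGen.X i) * ι Kfield (HGen.T' i))
        (ι Kfield (HGen.X (i + 1)))
  | TX (i j : ℕ) (h1 : j ≠ i) (h2 : j ≠ i + 1) :
      HRel (ι Kfield (HGen.T i) * ι Kfield (HGen.X j))
        (ι Kfield (HGen.X j) * ι Kfield (HGen.T i))
  | XX (i j : ℕ) :
      HRel (ι Kfield (HGen.X i) * ι Kfield (HGen.X j))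
        (ι Kfield (HGen.X j) * ι Kfield (HGen.X i))
  | TYT (i : ℕ) :
      HRel (ι Kfield (HGen.T i) * ι Kfield (HGen.Y i) * ι Kfield (HGen.T i))
        (ι Kfield (HGen.Y (i + 1)))
  | TY (i j : ℕ) (h1 : j ≠ i) (h2 : j ≠ i + 1) :
      HRel (ι Kfield (HGen.T i) * ι Kfield (HGen.Y j))
        (ι Kfield (HGen.Y j) * ι Kfield (HGen.T i))
  | YY (i j : ℕ) :
      HRel (ι Kfield (HGen.Y i) * ι Kfield (HGen.Y j))
        (ι Kfield (HGen.Y j) * ι Kfield (HGen.Y i))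
  | cross :
      HRel (ι Kfield (HGen.Y 0) * ι Kfield (HGen.T 0) * ι Kfield (HGen.X 0))
        (ι Kfield (HGen.X 1) * ι Kfield (HGen.Y 0) * ι Kfield (HGen.T 0))

/-- The stable limit DAHA `H⁺`. -/
abbrev Hplus : Type := RingQuot HRel

/-- The image in `H⁺` of a generator. -/
def gen (g : HGen) : Hplus := RingQuot.mkAlgHom Kfield HRel (FreeAlgebra.ι Kfield g)

/-- A letter of the two-letter alphabet `{X_i, Y_i}`: `true ↦ X_i`, `false ↦ Y_i`. -/
def letterElem (i : ℕ) (b : Bool) : Hplus := if b then gen (HGen.X i) else gen (HGen.Y i)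

/-- The element of `H⁺` corresponding to a word `u` in the alphabet `{X_i, Y_i}`. -/
def wordElem (i : ℕ) (u : List Bool) : Hplus := (u.map (letterElem i)).prod

/-- Permutations of `{1, 2, …}` (here realized as `ℕ`) moving only finitely many points. -/
def FinPerm : Type := {w : Equiv.Perm ℕ // {i | w i ≠ i}.Finite}

/-- The adjacent transposition `s_i = (i, i+1)`. -/
def swapAdj (i : ℕ) : Equiv.Perm ℕ := Equiv.swap i (i + 1)

/-- The permutation `s_{i₁} ⋯ s_{i_ℓ}` represented by a list of indices. -/
def wordPerm (l : List ℕ) : Equiv.Perm ℕ := (l.map swapAdj).prod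

/-- The element `T_{i₁} ⋯ T_{i_ℓ}` of `H⁺` attached to a list of indices. -/
def Tword (l : List ℕ) : Hplus := (l.map (fun i => gen (HGen.T i))).prod

instance : Zero (List Bool) := ⟨[]⟩

/-- The ordered product `u₁ u₂ ⋯ u_k` in `H⁺`. -/
def uProd (u : ℕ →₀ List Bool) (k : ℕ) : Hplus :=
  ((List.range k).map (fun i => wordElem i (u i))).prod


/-- The degree of a generator: `0` for `T_i, T_i'` and `1` for `X_i, Y_i`. -/
def genDeg : HGen → ℕ
  | HGen.T _ => 0
  | HGen.T' _ => 0
  | HGen.X _ => 1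
  | HGen.Y _ => 1

/-- A generator has admissible index for rank `k`: `T_i, T_i'` with `1 ≤ i ≤ k-1` (paper index
`i+1` in Lean's 0-based encoding, i.e. Lean index `< k-1`) and `X_i, Y_i` with `1 ≤ i ≤ k`
(Lean index `< k`). -/
def genOK (k : ℕ) : HGen → Prop
  | HGen.T i => i + 1 < k
  | HGen.T' i => i + 1 < k
  | HGen.X i => i < k
  | HGen.Y i => i < k

namespace StableDAHA

/-! ### Relations among the generators -/

lemma gen_rel {a b : FreeAlgebra Kfield HGen} (h : HRel a b) :
    RingQuot.mkAlgHom Kfield HRel a = RingQuot.mkAlgHom Kfield HRel b :=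
  RingQuot.mkAlgHom_rel Kfield h

/-- The generator `T_i` of `H⁺`. -/
def tt (i : ℕ) : Hplus := gen (HGen.T i)

/-- The generator `T_i'` of `H⁺`, the inverse of `T_i`. -/
def ti (i : ℕ) : Hplus := gen (HGen.T' i)

/-- The scalar `h` of `K`, as an element of `H⁺`. -/
def hc : Hplus := algebraMap Kfield Hplus hvar

lemma hc_mul (x : Hplus) : hc * x = hvar • x := (Algebra.smul_def _ _).symm

lemma hc_comm (x : Hplus) : hc * x = x * hc := Algebra.commutes _ _

lemma tt_ti (i : ℕ) : tt i * ti i = 1 := by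
  simpa [tt, ti, gen] using gen_rel (HRel.TT' i)

lemma ti_tt (i : ℕ) : ti i * tt i = 1 := by
  simpa [tt, ti, gen] using gen_rel (HRel.T'T i)

lemma tt_eq (i : ℕ) : tt i = ti i + hc := by
  have := gen_rel (HRel.TminusT' i)
  rw [map_sub, AlgHom.commutes] at this
  rw [tt, ti, hc, ← this, gen, gen]; abel

lemma ti_eq (i : ℕ) : ti i = tt i - hc := by rw [tt_eq]; abel

lemma tt_tt (i : ℕ) : tt i * tt i = 1 + hc * tt i := by
  conv_lhs => rw [tt_eq i]
  rw [add_mul, hc_mul, ← hc_mul, ← tt_eq, ti_tt]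

lemma tt_comm {i j : ℕ} (hij : i + 1 < j ∨ j + 1 < i) : tt i * tt j = tt j * tt i := by
  simpa [tt, gen] using gen_rel (HRel.Tcomm i j hij)

lemma tt_braid (i : ℕ) : tt i * tt (i + 1) * tt i = tt (i + 1) * tt i * tt (i + 1) := by
  simpa [tt, gen] using gen_rel (HRel.braid i)

/-- The element `t` with `t a_i t = a_{i+1}`: it is `T_i'` for the letter `X` and `T_i` for the
letter `Y`. -/
def tb (b : Bool) (i : ℕ) : Hplus := if b then ti i else tt i

/-- The inverse of `tb b i`. -/
def tbInv (b : Bool) (i : ℕ) : Hplus := if b then tt i else ti i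

lemma tb_tbInv (b : Bool) (i : ℕ) : tb b i * tbInv b i = 1 := by
  cases b <;> simp [tb, tbInv, tt_ti, ti_tt]

lemma tbInv_tb (b : Bool) (i : ℕ) : tbInv b i * tb b i = 1 := by
  cases b <;> simp [tb, tbInv, tt_ti, ti_tt]

lemma letter_succ (b : Bool) (i : ℕ) :
    letterElem (i + 1) b = tb b i * letterElem i b * tb b i := by
  cases b
  · simpa [tb, tt, letterElem, gen] using (gen_rel (HRel.TYT i)).symm
  · simpa [tb, ti, letterElem, gen] using (gen_rel (HRel.TXT i)).symm

lemma tt_letter {i j : ℕ} (b : Bool) (h1 : j ≠ i) (h2 : j ≠ i + 1) :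
    tt i * letterElem j b = letterElem j b * tt i := by
  cases b
  · simpa [tt, letterElem, gen] using gen_rel (HRel.TY i j h1 h2)
  · simpa [tt, letterElem, gen] using gen_rel (HRel.TX i j h1 h2)

lemma ti_letter {i j : ℕ} (b : Bool) (h1 : j ≠ i) (h2 : j ≠ i + 1) :
    ti i * letterElem j b = letterElem j b * ti i := by
  rw [ti_eq, sub_mul, mul_sub, tt_letter b h1 h2, hc_comm]

lemma tb_letter {i j : ℕ} (a b : Bool) (h1 : j ≠ i) (h2 : j ≠ i + 1) :
    tb a i * letterElem j b = letterElem j b * tb a i := by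
  cases a
  · exact tt_letter b h1 h2
  · exact ti_letter b h1 h2

lemma letter_comm (i j : ℕ) (b : Bool) :
    letterElem i b * letterElem j b = letterElem j b * letterElem i b := by
  cases b
  · simpa [letterElem, gen] using gen_rel (HRel.YY i j)
  · simpa [letterElem, gen] using gen_rel (HRel.XX i j)

lemma cross_rel : letterElem 0 false * tt 0 * letterElem 0 true =
    letterElem 1 true * letterElem 0 false * tt 0 := by
  simpa [tt, letterElem, gen] using gen_rel HRel.cross

lemma tb_letter_self (b : Bool) (i : ℕ) :
    tb b i * letterElem i b = letterElem (i + 1) b * tbInv b i := by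
  rw [letter_succ, mul_assoc _ (tb b i), tb_tbInv, mul_one]

lemma tbInv_letter_succ (b : Bool) (i : ℕ) :
    tbInv b i * letterElem (i + 1) b = letterElem i b * tb b i := by
  rw [letter_succ, ← mul_assoc, ← mul_assoc, tbInv_tb, one_mul]

/-! ### Products of generators of rank `k` -/

/-- The span of the products of generators of rank `k` with exactly `d` letters `X`, `Y`. -/
def A (k d : ℕ) : Submodule Kfield Hplus :=
  Submodule.span Kfield
    {x | ∃ l : List HGen, (∀ g ∈ l, genOK k g) ∧ (l.map genDeg).sum = d ∧ x = (l.map gen).prod}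

lemma one_mem_A (k : ℕ) : (1 : Hplus) ∈ A k 0 :=
  Submodule.subset_span ⟨[], by simp, by simp, by simp⟩

lemma mul_mem_A {k d e : ℕ} {x y : Hplus} (hx : x ∈ A k d) (hy : y ∈ A k e) :
    x * y ∈ A k (d + e) := by
  have h : x * y ∈ A k d * A k e := Submodule.mul_mem_mul hx hy
  rw [A, A, Submodule.span_mul_span] at h
  refine Submodule.span_mono ?_ h
  rintro _ ⟨_, ⟨l, hl, hd, rfl⟩, _, ⟨m, hm, he, rfl⟩, rfl⟩
  refine ⟨l ++ m, ?_, by simp [hd, he], by simp⟩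
  intro g hg
  rcases List.mem_append.1 hg with h | h
  exacts [hl g h, hm g h]

lemma gen_mem_A {k : ℕ} {g : HGen} (hg : genOK k g) : gen g ∈ A k (genDeg g) :=
  Submodule.subset_span ⟨[g], by simpa using hg, by simp, by simp⟩

lemma tt_mem_A {k i : ℕ} (h : i + 1 < k) : tt i ∈ A k 0 := gen_mem_A (g := .T i) h

lemma ti_mem_A {k i : ℕ} (h : i + 1 < k) : ti i ∈ A k 0 := gen_mem_A (g := .T' i) h

lemma tb_mem_A {k i : ℕ} (b : Bool) (h : i + 1 < k) : tb b i ∈ A k 0 := by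
  cases b
  exacts [tt_mem_A h, ti_mem_A h]

lemma tbInv_mem_A {k i : ℕ} (b : Bool) (h : i + 1 < k) : tbInv b i ∈ A k 0 := by
  cases b
  exacts [ti_mem_A h, tt_mem_A h]

lemma letter_mem_A {k i : ℕ} (b : Bool) (h : i < k) : letterElem i b ∈ A k 1 := by
  cases b
  exacts [gen_mem_A (g := .Y i) h, gen_mem_A (g := .X i) h]

lemma mul_zero_mem_A {k d : ℕ} {x y : Hplus} (hx : x ∈ A k d) (hy : y ∈ A k 0) :
    x * y ∈ A k d := by simpa using mul_mem_A hx hy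

lemma zero_mul_mem_A {k d : ℕ} {x y : Hplus} (hx : x ∈ A k 0) (hy : y ∈ A k d) :
    x * y ∈ A k d := by simpa using mul_mem_A hx hy

/-! ### Leading letters -/

/-- The span of the products `c_p x` with a leading letter `c_p ∈ {X_p, Y_p}` of index `p < m`
and `x` of rank `k` and degree `d`. -/
def N (k d m : ℕ) : Submodule Kfield Hplus :=
  Submodule.span Kfield {y | ∃ p < m, ∃ (b : Bool), ∃ x ∈ A k d, y = letterElem p b * x}

lemma letter_mul_mem_N {k d m p : ℕ} (hp : p < m) (b : Bool) {x : Hplus} (hx : x ∈ A k d) :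
    letterElem p b * x ∈ N k d m :=
  Submodule.subset_span ⟨p, hp, b, x, hx, rfl⟩

lemma N_mono {k d m n : ℕ} (h : m ≤ n) : N k d m ≤ N k d n := by
  refine Submodule.span_mono ?_
  rintro _ ⟨p, hp, b, x, hx, rfl⟩
  exact ⟨p, by omega, b, x, hx, rfl⟩

lemma N_mul {k d e m : ℕ} {y z : Hplus} (hy : y ∈ N k d m) (hz : z ∈ A k e) :
    y * z ∈ N k (d + e) m := by
  induction hy using Submodule.span_induction with
  | mem y hy =>
    obtain ⟨p, hp, b, x, hx, rfl⟩ := hy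
    rw [mul_assoc]
    exact letter_mul_mem_N hp b (mul_mem_A hx hz)
  | zero => rw [zero_mul]; exact Submodule.zero_mem _
  | add a b _ _ ha hb => rw [add_mul]; exact Submodule.add_mem _ ha hb
  | smul c a _ ha => rw [smul_mul_assoc]; exact Submodule.smul_mem _ _ ha

lemma N_mul_zero {k d m : ℕ} {y z : Hplus} (hy : y ∈ N k d m) (hz : z ∈ A k 0) :
    y * z ∈ N k d m := by simpa using N_mul hy hz

/-- Left multiplication by `T_i` does not raise the bound `m` on the leading index, unless
`i + 1 = m`. -/
lemma tt_mul_N {k d m i : ℕ} (hi : i + 1 < k) (him : i + 1 ≠ m) {y : Hplus}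
    (hy : y ∈ N k d m) : tt i * y ∈ N k d m := by
  induction hy using Submodule.span_induction with
  | mem y hy =>
    obtain ⟨p, hp, b, x, hx, rfl⟩ := hy
    have key : ∀ z ∈ A k 0, ∀ q < m, letterElem q b * z * x ∈ N k d m := fun z hz q hq => by
      rw [mul_assoc]; exact letter_mul_mem_N hq b (zero_mul_mem_A hz hx)
    have hsame : hc * (letterElem p b * x) ∈ N k d m := by
      rw [hc_mul]; exact Submodule.smul_mem _ _ (letter_mul_mem_N hp b hx)
    rw [← mul_assoc]
    by_cases h1 : p = i
    · subst h1
      have h := key _ (tbInv_mem_A b hi) (p + 1) (by omega)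
      rw [← tb_letter_self] at h
      cases b
      · exact h
      · rw [tt_eq, add_mul, add_mul, mul_assoc hc]
        exact Submodule.add_mem _ h hsame
    · by_cases h2 : p = i + 1
      · subst h2
        have h := key _ (tb_mem_A b hi) i (by omega)
        rw [← tbInv_letter_succ] at h
        cases b
        · rw [tt_eq, add_mul, add_mul, mul_assoc hc]
          exact Submodule.add_mem _ h hsame
        · exact h
      · rw [tt_letter b h1 h2]
        exact key _ (tt_mem_A hi) p hp
  | zero => rw [mul_zero]; exact Submodule.zero_mem _
  | add a b _ _ ha hb => rw [mul_add]; exact Submodule.add_mem _ ha hb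
  | smul c a _ ha => rw [mul_smul_comm]; exact Submodule.smul_mem _ _ ha

lemma ti_mul_N {k d m i : ℕ} (hi : i + 1 < k) (him : i + 1 ≠ m) {y : Hplus}
    (hy : y ∈ N k d m) : ti i * y ∈ N k d m := by
  rw [ti_eq, sub_mul, hc_mul]
  exact Submodule.sub_mem _ (tt_mul_N hi him hy) (Submodule.smul_mem _ _ hy)

lemma tb_mul_N {k d m i : ℕ} (c : Bool) (hi : i + 1 < k) (him : i + 1 ≠ m) {y : Hplus}
    (hy : y ∈ N k d m) : tb c i * y ∈ N k d m := by
  cases c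
  exacts [tt_mul_N hi him hy, ti_mul_N hi him hy]

/-- The two cases of lowest index: `X_2 Y_1 = Y_1 (T_1 X_1 T_1')` and
`Y_2 X_1 = X_1 (T_1' Y_1 T_1)` in one-based notation. -/
lemma exchange_base {k : ℕ} (hk : 1 < k) (a b : Bool) :
    letterElem 1 a * letterElem 0 b ∈ N k 1 1 := by
  have hT : tt 0 ∈ A k 0 := tt_mem_A (by omega)
  have hT' : ti 0 ∈ A k 0 := ti_mem_A (by omega)
  rcases eq_or_ne a b with rfl | hab
  · rw [letter_comm]
    exact letter_mul_mem_N one_pos a (letter_mem_A a hk)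
  · cases a
    · obtain rfl : b = true := by simpa using hab
      have e : letterElem 1 false * letterElem 0 true =
          letterElem 0 true * (ti 0 * letterElem 0 false * tt 0) := by
        have e1 : letterElem 1 true = ti 0 * letterElem 0 true * ti 0 := letter_succ true 0
        have e2 : letterElem 1 false = tt 0 * letterElem 0 false * tt 0 := letter_succ false 0
        calc letterElem 1 false * letterElem 0 true
            = tt 0 * (letterElem 0 false * tt 0 * letterElem 0 true) := by
              rw [e2]; simp only [mul_assoc]
          _ = (tt 0 * ti 0) * letterElem 0 true * ti 0 * letterElem 0 false * tt 0 := by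
              rw [cross_rel, e1]; simp only [mul_assoc]
          _ = _ := by rw [tt_ti, one_mul]; simp only [mul_assoc]
      rw [e]
      exact letter_mul_mem_N one_pos _
        (mul_zero_mem_A (zero_mul_mem_A hT' (letter_mem_A _ (by omega))) hT)
    · obtain rfl : b = false := by simpa using hab
      have e : letterElem 1 true * letterElem 0 false =
          letterElem 0 false * (tt 0 * letterElem 0 true * ti 0) := by
        calc letterElem 1 true * letterElem 0 false
            = (letterElem 1 true * letterElem 0 false * tt 0) * ti 0 := by
              rw [mul_assoc _ (tt 0), tt_ti, mul_one]
          _ = _ := by rw [← cross_rel]; simp only [mul_assoc]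
      rw [e]
      exact letter_mul_mem_N one_pos _
        (mul_zero_mem_A (zero_mul_mem_A hT (letter_mem_A _ (by omega))) hT')

/-- A product `a_j b_i` of two letters with `i < j` can be rewritten with leading letters of
index smaller than `j`. -/
lemma exchange {k : ℕ} (j : ℕ) : ∀ i, i < j → j < k → ∀ a b : Bool,
    letterElem j a * letterElem i b ∈ N k 1 j := by
  induction j with
  | zero => intro i hi; omega
  | succ j ih =>
    -- Conjugation by `T_j^{±1}` carries `a_j` to `a_{j+1}` and fixes `b_i` for `i < j`.
    have far : ∀ i, i < j → j + 1 < k → ∀ a b : Bool,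
        letterElem (j + 1) a * letterElem i b ∈ N k 1 j := by
      intro i hi hj a b
      have e : letterElem (j + 1) a * letterElem i b =
          tb a j * (letterElem j a * letterElem i b * tb a j) := by
        rw [letter_succ, mul_assoc _ (tb a j), tb_letter a b (by omega) (by omega)]
        simp only [mul_assoc]
      rw [e]
      exact tb_mul_N a hj (by omega) (N_mul_zero (ih i hi (by omega) a b) (tb_mem_A a hj))
    intro i hi hj a b
    rcases Nat.lt_succ_iff_lt_or_eq.1 hi with h | rfl
    · exact N_mono (by omega) (far i h hj a b)
    · rcases i with _ | i
      · exact exchange_base hj a b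
      · -- `T_i^{±1}` commutes with `a_{i+2}` and carries `b_i` to `b_{i+1}`.
        have e : letterElem (i + 1 + 1) a * letterElem (i + 1) b =
            tb b i * (letterElem (i + 1 + 1) a * letterElem i b * tb b i) := by
          rw [letter_succ b i, ← mul_assoc, ← mul_assoc,
            ← tb_letter (i := i) (j := i + 1 + 1) b a (by omega) (by omega)]
          simp only [mul_assoc]
        rw [e]
        refine tb_mul_N b (by omega) (by omega) ?_
        exact N_mul_zero (N_mono (by omega) (far i (by omega) hj a b)) (tb_mem_A b (by omega))

/-- A product of positive degree can be rewritten with a letter in front. -/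
lemma A_succ_le_N (k d : ℕ) : A k (d + 1) ≤ N k d k := by
  refine Submodule.span_le.2 ?_
  rintro _ ⟨l, hl, hd, rfl⟩
  rw [SetLike.mem_coe]
  induction l with
  | nil => simp at hd
  | cons g l ih =>
    have hg : genOK k g := hl g (by simp)
    have hl' : ∀ g ∈ l, genOK k g := fun g' h => hl g' (by simp [h])
    have hmem : (l.map gen).prod ∈ A k (l.map genDeg).sum :=
      Submodule.subset_span ⟨l, hl', rfl, rfl⟩
    rw [List.map_cons, List.prod_cons]
    rw [List.map_cons, List.sum_cons] at hd
    cases g with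
    | T i =>
      exact tt_mul_N hg hg.ne (ih hl' (by simpa [genDeg] using hd))
    | T' i =>
      exact ti_mul_N hg hg.ne (ih hl' (by simpa [genDeg] using hd))
    | X i =>
      have hd' : (l.map genDeg).sum = d := by simp only [genDeg] at hd; omega
      exact letter_mul_mem_N (p := i) hg true (hd' ▸ hmem)
    | Y i =>
      have hd' : (l.map genDeg).sum = d := by simp only [genDeg] at hd; omega
      exact letter_mul_mem_N (p := i) hg false (hd' ▸ hmem)

/-! ### Ordered words -/

/-- The ordered product `u_1 ⋯ u_k`, for an arbitrary family of words. -/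
def uP (u : ℕ → List Bool) (k : ℕ) : Hplus :=
  ((List.range k).map (fun i => wordElem i (u i))).prod

/-- The total number of letters of `u_1, …, u_k`. -/
def uLen (u : ℕ → List Bool) (k : ℕ) : ℕ := ((List.range k).map (fun i => (u i).length)).sum

lemma uP_succ (u : ℕ → List Bool) (k : ℕ) : uP u (k + 1) = uP u k * wordElem k (u k) := by
  simp [uP, List.range_succ]

lemma uLen_succ (u : ℕ → List Bool) (k : ℕ) : uLen u (k + 1) = uLen u k + (u k).length := by
  simp [uLen, List.range_succ]

lemma uP_nil {u : ℕ → List Bool} {k : ℕ} (h : ∀ i < k, u i = []) : uP u k = 1 := by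
  induction k with
  | zero => simp [uP]
  | succ k ih =>
    rw [uP_succ, ih fun i hi => h i (by omega), h k (by omega)]; simp [wordElem]

lemma uLen_nil {u : ℕ → List Bool} {k : ℕ} (h : ∀ i < k, u i = []) : uLen u k = 0 := by
  induction k with
  | zero => simp [uLen]
  | succ k ih =>
    rw [uLen_succ, ih fun i hi => h i (by omega), h k (by omega)]; simp

lemma uP_congr {u v : ℕ → List Bool} {k : ℕ} (h : ∀ i < k, u i = v i) : uP u k = uP v k := by
  rw [uP, uP]; congr 1
  exact List.map_congr_left fun i hi => by rw [h i (List.mem_range.1 hi)]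

lemma uLen_congr {u v : ℕ → List Bool} {k : ℕ} (h : ∀ i < k, u i = v i) :
    uLen u k = uLen v k := by
  rw [uLen, uLen]; congr 1
  exact List.map_congr_left fun i hi => by rw [h i (List.mem_range.1 hi)]

/-- Prepending a letter of index `p` to an ordered word whose letters all have index at least
`p` gives an ordered word. -/
lemma uP_cons {u : ℕ → List Bool} {p k : ℕ} (hu : ∀ i < p, u i = []) (hp : p < k) (b : Bool) :
    letterElem p b * uP u k = uP (Function.update u p (b :: u p)) k ∧
      uLen (Function.update u p (b :: u p)) k = uLen u k + 1 := by
  induction k with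
  | zero => omega
  | succ k ih =>
    rw [uP_succ, uP_succ, uLen_succ, uLen_succ]
    rcases Nat.lt_succ_iff_lt_or_eq.1 hp with h | rfl
    · rw [Function.update_of_ne (by omega), ← (ih h).1, (ih h).2, mul_assoc]
      exact ⟨rfl, by omega⟩
    · have h' : ∀ i < p, Function.update u p (b :: u p) i = [] := fun i hi => by
        rw [Function.update_of_ne (by omega), hu i hi]
      rw [uP_nil h', uP_nil hu, uLen_nil h', uLen_nil hu, Function.update_self]
      simp [wordElem, add_comm]

/-- The span of the elements `u_1 ⋯ u_k x`, where `u_1, …, u_k` have `d` letters in total and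
`x` is a product of generators `T_i`, `T_i'` of rank `k`. -/
def S (k d : ℕ) : Submodule Kfield Hplus :=
  Submodule.span Kfield {y | ∃ (u : ℕ → List Bool), uLen u k = d ∧ ∃ x ∈ A k 0, y = uP u k * x}

lemma uP_mem_A (u : ℕ → List Bool) (k : ℕ) {n : ℕ} (hn : n ≤ k) :
    uP u n ∈ A k (uLen u n) := by
  induction n with
  | zero => simpa [uP, uLen] using one_mem_A k
  | succ n ih =>
    rw [uP_succ, uLen_succ]
    refine mul_mem_A (ih (by omega)) ?_
    induction u n with
    | nil => simpa [wordElem] using one_mem_A k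
    | cons b t iht =>
      have := mul_mem_A (letter_mem_A b (show n < k by omega)) iht
      rw [List.length_cons, add_comm]
      simpa [wordElem] using this

/-- Left multiplication by a letter sends ordered words to combinations of ordered words; the
induction on the index `j` is driven by `exchange`. -/
lemma letter_mul_S {k d : ℕ} (hA : A k d ≤ S k d) (j : ℕ) : j < k → ∀ (a : Bool) (y : Hplus),
    y ∈ S k d → letterElem j a * y ∈ S k (d + 1) := by
  induction j using Nat.strong_induction_on with
  | _ j ih =>
    intro hj a y hy
    have hN : N k d j ≤ S k (d + 1) := by
      refine Submodule.span_le.2 ?_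
      rintro _ ⟨p, hp, b, x, hx, rfl⟩
      exact ih p hp (by omega) b x (hA hx)
    induction hy using Submodule.span_induction with
    | mem y hy =>
      obtain ⟨u, hu, x, hx, rfl⟩ := hy
      by_cases hmin : ∀ i < j, u i = []
      · obtain ⟨h1, h2⟩ := uP_cons hmin hj a
        rw [← mul_assoc, h1]
        exact Submodule.subset_span ⟨_, by rw [h2, hu], x, hx, rfl⟩
      · push Not at hmin
        classical
        -- Split off the first letter `b_i` of the ordered word; here `i < j`.
        have hex : ∃ i, u i ≠ [] := hmin.imp fun i h => h.2
        set i := Nat.find hex with hi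
        have hij : i < j := by
          obtain ⟨i', h1, h2⟩ := hmin
          exact lt_of_le_of_lt (Nat.find_min' hex h2) h1
        have hlow : ∀ m < i, u m = [] := fun m hm => by
          simpa using Nat.find_min hex hm
        obtain ⟨b, t, hbt⟩ := List.exists_cons_of_ne_nil (Nat.find_spec hex)
        rw [← hi] at hbt
        set v := Function.update u i t with hv
        have hvlow : ∀ m < i, v m = [] := fun m hm => by
          rw [hv, Function.update_of_ne (by omega), hlow m hm]
        have hvu : Function.update v i (b :: v i) = u := by
          rw [hv, Function.update_self, Function.update_idem, ← hbt, Function.update_eq_self]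
        obtain ⟨h1, h2⟩ := uP_cons hvlow (show i < k by omega) b
        rw [hvu] at h1 h2
        apply hN
        have e : letterElem j a * (uP u k * x) =
            letterElem j a * letterElem i b * (uP v k * x) := by
          rw [← h1]; simp only [mul_assoc]
        have hd : d = 1 + uLen v k := by omega
        rw [e, hd]
        exact N_mul (exchange j i hij hj a b) (mul_zero_mem_A (uP_mem_A v k le_rfl) hx)
    | zero => rw [mul_zero]; exact Submodule.zero_mem _
    | add a b _ _ ha hb => rw [mul_add]; exact Submodule.add_mem _ ha hb
    | smul c a _ ha => rw [mul_smul_comm]; exact Submodule.smul_mem _ _ ha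

lemma A_le_S (k d : ℕ) : A k d ≤ S k d := by
  induction d with
  | zero =>
    intro x hx
    refine Submodule.subset_span ⟨fun _ => [], uLen_nil (by simp), x, hx, ?_⟩
    rw [uP_nil (by simp), one_mul]
  | succ d ih =>
    refine (A_succ_le_N k d).trans (Submodule.span_le.2 ?_)
    rintro _ ⟨p, hp, b, x, hx, rfl⟩
    exact letter_mul_S ih p hp b x (ih hx)

/-! ### Reduced words in the Hecke algebra -/

/-- A word `s_{i₁} ⋯ s_{i_ℓ}` in the adjacent transpositions, built from the right, in which
every step `w ↦ s_i w` is an ascent, i.e. `w⁻¹(i) < w⁻¹(i+1)`. -/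
def Red : List ℕ → Prop
  | [] => True
  | i :: l => Red l ∧ (wordPerm l)⁻¹ i < (wordPerm l)⁻¹ (i + 1)

lemma wordPerm_cons (i : ℕ) (l : List ℕ) : wordPerm (i :: l) = swapAdj i * wordPerm l := by
  simp [wordPerm]

lemma Tword_cons (i : ℕ) (l : List ℕ) : Tword (i :: l) = tt i * Tword l := by
  simp [Tword, tt]

lemma swapAdj_mul_self (i : ℕ) : swapAdj i * swapAdj i = 1 := Equiv.swap_mul_self _ _

lemma swapAdj_mul_cancel (i : ℕ) (w : Equiv.Perm ℕ) : swapAdj i * (swapAdj i * w) = w := by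
  rw [← mul_assoc, swapAdj_mul_self, one_mul]

lemma inv_swapAdj_mul (i j : ℕ) (w : Equiv.Perm ℕ) :
    (swapAdj i * w)⁻¹ j = w⁻¹ (swapAdj i j) := by
  rw [mul_inv_rev, Equiv.Perm.mul_apply, swapAdj, Equiv.swap_inv]

lemma inv_left (i : ℕ) (w : Equiv.Perm ℕ) : (swapAdj i * w)⁻¹ i = w⁻¹ (i + 1) := by
  rw [inv_swapAdj_mul, swapAdj, Equiv.swap_apply_left]

lemma inv_right (i : ℕ) (w : Equiv.Perm ℕ) : (swapAdj i * w)⁻¹ (i + 1) = w⁻¹ i := by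
  rw [inv_swapAdj_mul, swapAdj, Equiv.swap_apply_right]

lemma inv_other {i j : ℕ} (h1 : j ≠ i) (h2 : j ≠ i + 1) (w : Equiv.Perm ℕ) :
    (swapAdj i * w)⁻¹ j = w⁻¹ j := by
  rw [inv_swapAdj_mul, swapAdj, Equiv.swap_apply_of_ne_of_ne h1 h2]

lemma swapAdj_comm {i j : ℕ} (hij : i + 1 < j ∨ j + 1 < i) :
    swapAdj i * swapAdj j = swapAdj j * swapAdj i := by
  refine (Equiv.Perm.Disjoint.commute ?_).eq
  intro x
  by_cases hx : x = i ∨ x = i + 1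
  · right
    exact Equiv.swap_apply_of_ne_of_ne (by omega) (by omega)
  · left
    exact Equiv.swap_apply_of_ne_of_ne (by omega) (by omega)

lemma swapAdj_braid (i : ℕ) :
    swapAdj i * swapAdj (i + 1) * swapAdj i = swapAdj (i + 1) * swapAdj i * swapAdj (i + 1) := by
  rw [swapAdj, swapAdj, Equiv.swap_mul_swap_mul_swap (by omega) (by omega),
    Equiv.swap_comm i (i + 1), Equiv.swap_comm (i + 1) (i + 1 + 1),
    Equiv.swap_mul_swap_mul_swap (by omega) (by omega), Equiv.swap_comm]

/-- The exchange property together with its lift to `H⁺`: if `i` is a left descent of a word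
`l` in `Red`, then `l` can be replaced by a word `i :: m` in `Red` of the same length without
changing either the permutation or the product of the `T`'s. -/
lemma red_exchange (n : ℕ) : ∀ (l : List ℕ) (i : ℕ), l.length = n → Red l →
    (wordPerm l)⁻¹ (i + 1) < (wordPerm l)⁻¹ i →
    ∃ m, Red m ∧ m.length + 1 = l.length ∧ wordPerm l = swapAdj i * wordPerm m ∧
      Tword l = tt i * Tword m := by
  induction n using Nat.strong_induction_on with
  | _ n ih =>
    intro l i hl hred hdes
    rcases l with _ | ⟨j, l'⟩
    · simp [wordPerm] at hdes
    obtain ⟨hred', hasc⟩ := hred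
    rw [List.length_cons] at hl
    rw [wordPerm_cons] at hdes
    by_cases hij : i = j
    · subst hij
      exact ⟨l', hred', by simp, wordPerm_cons _ _, Tword_cons _ _⟩
    by_cases h1 : i = j + 1
    · subst h1
      rw [inv_right, inv_other (by omega) (by omega)] at hdes
      obtain ⟨m', hm', hlen', hp', hT'⟩ :=
        ih l'.length (by omega) l' (j + 1) rfl hred' (hdes.trans hasc)
      rw [hp', inv_right, inv_other (by omega) (by omega)] at hdes
      rw [hp', inv_left, inv_other (by omega) (by omega)] at hasc
      obtain ⟨m, hm, hlen, hp, hT⟩ := ih m'.length (by omega) m' j rfl hm' hdes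
      rw [hp, inv_left, inv_other (by omega) (by omega)] at hasc
      rw [hp, inv_right, inv_left] at hdes
      refine ⟨j :: (j + 1) :: m, ⟨⟨hm, hasc⟩, ?_⟩, ?_, ?_, ?_⟩
      · rw [wordPerm_cons, inv_left, inv_other (by omega) (by omega)]
        exact hdes.trans hasc
      · simp only [List.length_cons]; omega
      · rw [wordPerm_cons, wordPerm_cons, wordPerm_cons, hp', hp]
        simp only [← mul_assoc]; rw [swapAdj_braid]
      · rw [Tword_cons, Tword_cons, Tword_cons, hT', hT]
        simp only [← mul_assoc]; rw [tt_braid]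
    by_cases h2 : j = i + 1
    · subst h2
      rw [inv_left, inv_other (by omega) (by omega)] at hdes
      obtain ⟨m', hm', hlen', hp', hT'⟩ :=
        ih l'.length (by omega) l' i rfl hred' (hasc.trans hdes)
      rw [hp', inv_left, inv_other (by omega) (by omega)] at hdes
      rw [hp', inv_right, inv_other (by omega) (by omega)] at hasc
      obtain ⟨m, hm, hlen, hp, hT⟩ := ih m'.length (by omega) m' (i + 1) rfl hm' hdes
      rw [hp, inv_right, inv_other (by omega) (by omega)] at hasc
      rw [hp, inv_right, inv_left] at hdes
      refine ⟨(i + 1) :: i :: m, ⟨⟨hm, hasc⟩, ?_⟩, ?_, ?_, ?_⟩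
      · rw [wordPerm_cons, inv_right, inv_other (by omega) (by omega)]
        exact hasc.trans hdes
      · simp only [List.length_cons]; omega
      · rw [wordPerm_cons, wordPerm_cons, wordPerm_cons, hp', hp]
        simp only [← mul_assoc]; rw [swapAdj_braid]
      · rw [Tword_cons, Tword_cons, Tword_cons, hT', hT]
        simp only [← mul_assoc]; rw [tt_braid]
    · rw [inv_other (by omega) (by omega), inv_other (by omega) (by omega)] at hdes
      obtain ⟨m, hm, hlen, hp, hT⟩ := ih l'.length (by omega) l' i rfl hred' hdes
      rw [hp, inv_other (by omega) (by omega), inv_other (by omega) (by omega)] at hasc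
      have hfar : i + 1 < j ∨ j + 1 < i := by omega
      refine ⟨j :: m, ⟨hm, hasc⟩, by simp only [List.length_cons]; omega, ?_, ?_⟩
      · rw [wordPerm_cons, wordPerm_cons, hp, ← mul_assoc, ← mul_assoc, swapAdj_comm hfar]
      · rw [Tword_cons, Tword_cons, hT, ← mul_assoc, ← mul_assoc, tt_comm hfar]

/-- Matsumoto's theorem for the words in `Red`: the product of the `T`'s depends only on the
permutation. -/
lemma red_unique (l : List ℕ) : ∀ l', Red l → Red l' → wordPerm l = wordPerm l' →
    Tword l = Tword l' := by
  induction l with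
  | nil =>
    intro l' _ hl' h
    rcases l' with _ | ⟨j, l'⟩
    · rfl
    · obtain ⟨_, hasc⟩ := hl'
      rw [wordPerm_cons] at h
      have e : wordPerm l' = swapAdj j := by
        rw [← swapAdj_mul_cancel j (wordPerm l'), ← h]; simp [wordPerm]
      rw [e] at hasc
      simp [swapAdj] at hasc
  | cons i l ih =>
    intro l' hl hl' h
    obtain ⟨hl, hasc⟩ := hl
    have hdes : (wordPerm l')⁻¹ (i + 1) < (wordPerm l')⁻¹ i := by
      rw [← h, wordPerm_cons, inv_left, inv_right]; exact hasc
    obtain ⟨m, hm, _, hp, hT⟩ := red_exchange _ l' i rfl hl' hdes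
    rw [Tword_cons, hT, ih m hl hm]
    rw [wordPerm_cons, hp] at h
    exact mul_left_cancel h

lemma lt_or_gt_inv (w : Equiv.Perm ℕ) (i : ℕ) :
    w⁻¹ i < w⁻¹ (i + 1) ∨ w⁻¹ (i + 1) < w⁻¹ i :=
  lt_or_gt_of_ne fun h => by simpa using w⁻¹.injective h

/-- Every word that is not in `Red` can be shortened to one in `Red`. -/
lemma exists_red (l : List ℕ) :
    ∃ m, Red m ∧ wordPerm m = wordPerm l ∧ (Red l ∨ m.length < l.length) := by
  induction l with
  | nil => exact ⟨[], trivial, rfl, Or.inl trivial⟩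
  | cons i l ih =>
    obtain ⟨m, hm, hp, h⟩ := ih
    -- `Red l` allows the choice `m = l`; in either case `m` is no longer than `l`.
    obtain ⟨m, hm, hp, h⟩ : ∃ m, Red m ∧ wordPerm m = wordPerm l ∧
        (m = l ∨ m.length < l.length) := by
      rcases h with h | h
      · exact ⟨l, h, rfl, Or.inl rfl⟩
      · exact ⟨m, hm, hp, Or.inr h⟩
    have hle : m.length ≤ l.length := by
      rcases h with rfl | h
      exacts [le_rfl, h.le]
    rcases lt_or_gt_inv (wordPerm m) i with hasc | hdes
    · refine ⟨i :: m, ⟨hm, hasc⟩, by rw [wordPerm_cons, wordPerm_cons, hp], ?_⟩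
      rcases h with rfl | h
      · exact Or.inl ⟨hm, hasc⟩
      · right; simpa using h
    · obtain ⟨m', hm', hlen, hp', _⟩ := red_exchange _ m i rfl hm hdes
      refine ⟨m', hm', ?_, ?_⟩
      · rw [wordPerm_cons, ← hp, hp', swapAdj_mul_cancel]
      · right; rw [List.length_cons]; omega

/-- Expressions of minimal length lie in `Red`. -/
lemma red_of_min {l : List ℕ} (h : ∀ l', wordPerm l' = wordPerm l → l.length ≤ l'.length) :
    Red l := by
  obtain ⟨m, _, hp, h' | h'⟩ := exists_red l
  · exact h'
  · have := h m hp; omega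

/-- The identity permutation. -/
def onePerm : FinPerm := ⟨1, by simp⟩

/-- The permutation `s_i w`. -/
def mulSwap (i : ℕ) (w : FinPerm) : FinPerm :=
  ⟨swapAdj i * w.1, by
    refine (w.2.union (Set.toFinite {i, i + 1})).subset ?_
    intro x hx
    by_contra hcon
    simp only [Set.mem_union, Set.mem_ofPred_eq, Set.mem_insert_iff, Set.mem_singleton_iff,
      not_or, not_not] at hcon
    apply hx
    rw [Equiv.Perm.mul_apply, hcon.1]
    exact Equiv.swap_apply_of_ne_of_ne hcon.2.1 hcon.2.2⟩

lemma mulSwap_support {i k : ℕ} (hi : i + 1 < k) {w : FinPerm}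
    (hw : {x | w.1 x ≠ x} ⊆ Set.Iio k) : {x | (mulSwap i w).1 x ≠ x} ⊆ Set.Iio k := by
  intro x hx
  by_contra hcon
  rw [Set.mem_Iio, not_lt] at hcon
  apply hx
  have hfix : w.1 x = x := by
    by_contra h
    exact absurd (hw h) (by simpa using hcon)
  change (swapAdj i * w.1) x = x
  rw [Equiv.Perm.mul_apply, hfix]
  exact Equiv.swap_apply_of_ne_of_ne (by omega) (by omega)

/-- The span of the elements `T_w`, `w ∈ S_k`, for the chosen reduced expressions `rw`. -/
def Hk (rw : FinPerm → List ℕ) (k : ℕ) : Submodule Kfield Hplus :=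
  Submodule.span Kfield
    {x | ∃ w : FinPerm, {i | w.1 i ≠ i} ⊆ Set.Iio k ∧ x = Tword (rw w)}

lemma tt_mul_Hk {rw : FinPerm → List ℕ} (heq : ∀ w : FinPerm, wordPerm (rw w) = w.1)
    (hred : ∀ w, Red (rw w)) {k i : ℕ} (hi : i + 1 < k) {y : Hplus} (hy : y ∈ Hk rw k) :
    tt i * y ∈ Hk rw k := by
  induction hy using Submodule.span_induction with
  | mem y hy =>
    obtain ⟨w, hw, rfl⟩ := hy
    have hs := mulSwap_support hi hw
    have hmem : Tword (rw (mulSwap i w)) ∈ Hk rw k := Submodule.subset_span ⟨_, hs, rfl⟩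
    have hperm : wordPerm (rw (mulSwap i w)) = swapAdj i * wordPerm (rw w) := by
      rw [heq, heq]; rfl
    rcases lt_or_gt_inv (wordPerm (rw w)) i with hasc | hdes
    · rw [← Tword_cons, red_unique (i :: rw w) (rw (mulSwap i w)) ⟨hred w, hasc⟩ (hred _)
        (by rw [wordPerm_cons, hperm])]
      exact hmem
    · obtain ⟨m, hm, _, hp, hT⟩ := red_exchange _ (rw w) i rfl (hred w) hdes
      have e : Tword m = Tword (rw (mulSwap i w)) :=
        red_unique m _ hm (hred _) (by rw [hperm, hp, swapAdj_mul_cancel])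
      have e2 : tt i * Tword (rw w) = Tword (rw (mulSwap i w)) + hvar • Tword (rw w) := by
        rw [hT, ← mul_assoc, tt_tt, add_mul, one_mul, mul_assoc, hc_mul, e]
      rw [e2]
      exact Submodule.add_mem _ hmem
        (Submodule.smul_mem _ _ (Submodule.subset_span ⟨w, hw, rfl⟩))
  | zero => rw [mul_zero]; exact Submodule.zero_mem _
  | add a b _ _ ha hb => rw [mul_add]; exact Submodule.add_mem _ ha hb
  | smul c a _ ha => rw [mul_smul_comm]; exact Submodule.smul_mem _ _ ha

lemma A_zero_le_Hk {rw : FinPerm → List ℕ} (heq : ∀ w : FinPerm, wordPerm (rw w) = w.1)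
    (hred : ∀ w, Red (rw w)) (k : ℕ) : A k 0 ≤ Hk rw k := by
  refine Submodule.span_le.2 ?_
  rintro _ ⟨l, hl, hd, rfl⟩
  rw [SetLike.mem_coe]
  induction l with
  | nil =>
    have e : (1 : Hplus) = Tword (rw onePerm) := by
      have : Tword [] = Tword (rw onePerm) :=
        red_unique [] _ trivial (hred _) (by rw [heq]; simp [wordPerm, onePerm])
      rw [← this]; simp [Tword]
    rw [List.map_nil, List.prod_nil, e]
    exact Submodule.subset_span ⟨_, by simp [onePerm], rfl⟩
  | cons g l ih =>
    have hg : genOK k g := hl g (by simp)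
    have hl' : ∀ g ∈ l, genOK k g := fun g' h => hl g' (by simp [h])
    rw [List.map_cons, List.sum_cons] at hd
    have ih' := ih hl' (by omega)
    rw [List.map_cons, List.prod_cons]
    cases g with
    | T i => exact tt_mul_Hk heq hred hg ih'
    | T' i =>
      change ti i * _ ∈ _
      rw [ti_eq, sub_mul, hc_mul]
      exact Submodule.sub_mem _ (tt_mul_Hk heq hred hg ih') (Submodule.smul_mem _ _ ih')
    | X i => simp [genDeg] at hd
    | Y i => simp [genDeg] at hd

end StableDAHA

/-- Every product of the generators `T_i, T_i'` (`1 ≤ i ≤ k-1`) and `X_i, Y_i` (`1 ≤ i ≤ k`)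
of `H⁺` having exactly `D` factors of `X`- or `Y`-type lies in the `K`-linear span of the
standard words `u₁ u₂ ⋯ u_k T_w` with `w ∈ S_k`, each `u_i` a word in `{X_i, Y_i}`, and the
total number of letters of `u₁, …, u_k` equal to `D`. `rw` is a fixed choice of reduced
expressions. -/
theorem statement1 (rw : FinPerm → List ℕ)
    (hrw_eq : ∀ w : FinPerm, wordPerm (rw w) = w.1)
    (hrw_red : ∀ w : FinPerm, ∀ l : List ℕ, wordPerm l = w.1 → (rw w).length ≤ l.length)
    (k D : ℕ) (hk : 1 ≤ k) (l : List HGen)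
    (hidx : ∀ g ∈ l, genOK k g) (hdeg : (l.map genDeg).sum = D) :
    (l.map gen).prod ∈ Submodule.span Kfield
      { x : Hplus | ∃ (u : ℕ →₀ List Bool) (w : FinPerm),
          (∀ i : ℕ, u i ≠ [] → i < k) ∧
          {i | w.1 i ≠ i} ⊆ Set.Iio k ∧
          ((List.range k).map (fun i => (u i).length)).sum = D ∧
          x = uProd u k * Tword (rw w) } := by
  have hred : ∀ w, StableDAHA.Red (rw w) := fun w =>
    StableDAHA.red_of_min fun l' h => hrw_red w l' (h.trans (hrw_eq w))
  have hl : (l.map gen).prod ∈ StableDAHA.A k D := Submodule.subset_span ⟨l, hidx, hdeg, rfl⟩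
  refine Submodule.span_le.2 ?_ (StableDAHA.A_le_S k D hl)
  rintro _ ⟨u, hu, x, hx, rfl⟩
  rw [SetLike.mem_coe]
  have hx' := StableDAHA.A_zero_le_Hk hrw_eq hred k hx
  clear hx
  induction hx' using Submodule.span_induction with
  | mem x hx =>
    obtain ⟨w, hw, rfl⟩ := hx
    -- Truncate the family of words to the indices below `k`.
    let v : ℕ → List Bool := fun i => if i < k then u i else []
    have hv : ∀ i < k, v i = u i := fun i hi => if_pos hi
    have hv' : ∀ i, v i ≠ [] → i < k := fun i h => by
      by_contra hi
      exact h (if_neg hi)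
    refine Submodule.subset_span ⟨Finsupp.ofSupportFinite v
      ((Set.finite_Iio k).subset fun i hi => hv' i hi), w, hv', hw, ?_, ?_⟩
    · exact (StableDAHA.uLen_congr hv).trans hu
    · rw [← StableDAHA.uP_congr hv]; rfl
  | zero => rw [mul_zero]; exact Submodule.zero_mem _
  | add a b _ _ ha hb => rw [mul_add]; exact Submodule.add_mem _ ha hb
  | smul c a _ ha => rw [mul_smul_comm]; exact Submodule.smul_mem _ _ ha

end
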